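/- Let a ∈ ℝ, let I be an interval with least element a, nonempty interior, and I ⊂ [a,∞), let m ∈ ℕ*, let α = (α₁,…,α_m) ∈ (0,1]^m, let q_a ∈ ℝ^m, let A : I → ℝ^{m×m} and B : I → ℝ^m be locally essentially bounded, and let Z satisfy, for almost every s, t ∈ I with s < t and all i, j, the integral equation Z_{ij}(t,s) = ((t−s)^{α_i−1}/Γ(α_i))·δ_{ij} + (1/Γ(α_i)) ∫_s^t (t−τ)^{α_i−1} (A(τ) Z(τ,s))_{ij} dτ, together with the bound |Z_{ij}(t,s)| ≤ (t−s)^{α_i−1}·Θ^b on each [a,b] ⊂ I for some Θ^b ≥ 0. Then the function q defined for almost every t ∈ I by q(t) := Z(t,a)·q_a + ∫_a^t Z(t,s)·B(s) ds satisfies the Duhamel integral representation: for almost every t ∈ I and every i ∈ {1,…,m}, q_i(t) = ((t−a)^{α_i−1}/Γ(α_i))·(q_a)_i + (1/Γ(α_i)) ∫_a^t (t−τ)^{α_i−1} (A(τ)·q(τ) + B(τ))_i dτ; equivalently, q is the unique global solution of the non-homogeneous linear Riemann–Liouville Cauchy problem D^{α_i}_{a+}[q_i] = (A q + B)_i a.e.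 on I with I^{1−α_i}_{a+}[q_i](a) = (q_a)_i. -/

import Mathlib

open MeasureTheory Set

/-- Left Riemann–Liouville fractional integral of order `α` with base point `a`
(for `α = 0` it is the identity). -/
noncomputable def rlInt (a α : ℝ) (q : ℝ → ℝ) (t : ℝ) : ℝ :=
  if α = 0 then q t else (1 / Real.Gamma α) * ∫ τ in a..t, (t - τ) ^ (α - 1) * q τ

/-- `q` is locally integrable on the interval `I` with least element `a`. -/
def LocIntegrableOn (a : ℝ) (I : Set ℝ) (q : ℝ → ℝ) : Prop :=
  ∀ b ∈ I, MeasureTheory.IntegrableOn q (Set.Icc a b)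

/-- `q` is a global solution on `If` of the Riemann–Liouville Cauchy problem
`D^{α_i}_{a+}[q_i] = F_i(q(·),·)` a.e. on `If`, `I^{1-α_i}_{a+}[q_i](a) = (qa)_i`. -/
def IsRLSolution (a : ℝ) (If : Set ℝ) {m : ℕ} (α : Fin m → ℝ) (qa : Fin m → ℝ)
    (F : (Fin m → ℝ) → ℝ → Fin m → ℝ) (q : ℝ → Fin m → ℝ) : Prop :=
  (∀ i, LocIntegrableOn a If fun t => q t i) ∧
  ∀ i, ∃ h : ℝ → ℝ, LocIntegrableOn a If h ∧
    (∀ᵐ t ∂(MeasureTheory.volume.restrict If),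
      rlInt a (1 - α i) (fun τ => q τ i) t = qa i + ∫ τ in a..t, h τ) ∧
    (∀ᵐ t ∂(MeasureTheory.volume.restrict If), h t = F (q t) t i)


open Filter Topology

/-- Truncated Riemann–Liouville kernel. -/
noncomputable def kk (L α : ℝ) : ℝ → ℝ :=
  indicator (Icc 0 L) (fun x => x ^ (α - 1) / Real.Gamma α)

/-- Convolution on the line. -/
noncomputable def cv (f g : ℝ → ℝ) (t : ℝ) : ℝ := ∫ τ, f (t - τ) * g τ

theorem kk_of_mem {L α x : ℝ} (h0 : 0 ≤ x) (h1 : x ≤ L) :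
    kk L α x = x ^ (α - 1) / Real.Gamma α := by
  simp [kk, h0, h1]

theorem kk_of_neg {L α x : ℝ} (h0 : x < 0) : kk L α x = 0 := by
  simp [kk, h0.not_ge]

theorem kk_nonneg {L α : ℝ} (hα : 0 < α) (x : ℝ) : 0 ≤ kk L α x := by
  apply indicator_nonneg
  intro x hx
  exact div_nonneg (Real.rpow_nonneg hx.1 _) (Real.Gamma_pos_of_pos hα).le

theorem kk_measurable (L α : ℝ) : Measurable (kk L α) := by
  unfold kk
  apply Measurable.indicator _ measurableSet_Icc
  fun_prop

theorem kk_integrable {L α : ℝ} (hL : 0 ≤ L) (hα : 0 < α) : Integrable (kk L α) := by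
  unfold kk
  rw [integrable_indicator_iff measurableSet_Icc, integrableOn_Icc_iff_integrableOn_Ioc,
    ← intervalIntegrable_iff_integrableOn_Ioc_of_le hL]
  exact (intervalIntegral.intervalIntegrable_rpow' (by linarith)).div_const _

theorem cv_eq_conv (f g : ℝ → ℝ) :
    cv f g = convolution f g (ContinuousLinearMap.mul ℝ ℝ) volume := by
  ext t
  rw [convolution_mul_swap]; rfl

theorem cv_integrable {f g : ℝ → ℝ} (hf : Integrable f) (hg : Integrable g) :
    Integrable (cv f g) := by
  rw [cv_eq_conv]; exact hf.integrable_convolution _ hg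

theorem cv_integral {f g : ℝ → ℝ} (hf : Integrable f) (hg : Integrable g) :
    ∫ t, cv f g t = (∫ t, f t) * ∫ t, g t := by
  rw [cv_eq_conv, integral_convolution _ hf hg]; rfl

theorem cv_exists {f g : ℝ → ℝ} (hf : Integrable f) (hg : Integrable g) :
    ∀ᵐ t, Integrable (fun τ => f (t - τ) * g τ) := by
  filter_upwards [hf.ae_convolution_exists (ContinuousLinearMap.mul ℝ ℝ) hg] with t ht
  exact ht.integrable_swap

theorem cv_assoc {f g h : ℝ → ℝ} (hf : Integrable f) (hg : Integrable g) (hh : Integrable h) :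
    ∀ᵐ t, cv f (cv g h) t = cv (cv f g) h t := by
  have h1 := hf.norm.ae_convolution_exists (ContinuousLinearMap.mul ℝ ℝ)
    (hg.norm.integrable_convolution (ContinuousLinearMap.mul ℝ ℝ) hh.norm)
  filter_upwards [h1] with t ht
  simp only [cv_eq_conv]
  symm
  exact convolution_assoc (ContinuousLinearMap.mul ℝ ℝ) (ContinuousLinearMap.mul ℝ ℝ)
    (ContinuousLinearMap.mul ℝ ℝ) (ContinuousLinearMap.mul ℝ ℝ)
    (fun x y z => by simp [mul_assoc]) hf.aestronglyMeasurable hg.aestronglyMeasurable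
    hh.aestronglyMeasurable (hf.ae_convolution_exists _ hg)
    (hg.norm.ae_convolution_exists _ hh.norm) ht

theorem cv_add {f g h : ℝ → ℝ} (hf : Integrable f) (hg : Integrable g) (hh : Integrable h) :
    ∀ᵐ t, cv f (fun x => g x + h x) t = cv f g t + cv f h t := by
  filter_upwards [cv_exists hf hg, cv_exists hf hh] with t h1 h2
  unfold cv
  rw [← integral_add h1 h2]
  simp only [mul_add]

theorem cv_sub {f g h : ℝ → ℝ} (hf : Integrable f) (hg : Integrable g) (hh : Integrable h) :
    ∀ᵐ t, cv f (fun x => g x - h x) t = cv f g t - cv f h t := by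
  filter_upwards [cv_exists hf hg, cv_exists hf hh] with t h1 h2
  unfold cv
  rw [← integral_sub h1 h2]
  simp only [mul_sub]

/-- Causality. -/
theorem cv_congr {L α b : ℝ} {g h : ℝ → ℝ} (hgh : ∀ᵐ t, t ≤ b → g t = h t) {t : ℝ} (ht : t ≤ b) :
    cv (kk L α) g t = cv (kk L α) h t := by
  unfold cv
  apply integral_congr_ae
  filter_upwards [hgh] with τ hτ
  rcases le_or_gt τ b with h1 | h1
  · simp only [hτ h1]
  · simp only [kk_of_neg (show t - τ < 0 by linarith), zero_mul]

/-- bridge with the interval integrals -/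
theorem cv_bridge' {a b α L : ℝ} (hL : b - a ≤ L) (g : ℝ → ℝ) {t : ℝ} (hat : a ≤ t) (htb : t ≤ b) :
    cv (kk L α) (indicator (Ioc a b) g) t
      = (1 / Real.Gamma α) * ∫ τ in a..t, (t - τ) ^ (α - 1) * g τ := by
  unfold cv
  rw [intervalIntegral.integral_of_le hat, ← integral_const_mul, ← integral_indicator measurableSet_Ioc]
  congr 1
  ext τ
  by_cases h1 : τ ∈ Ioc a b
  · rw [indicator_of_mem h1]
    by_cases h2 : τ ≤ t
    · rw [indicator_of_mem (show τ ∈ Ioc a t from ⟨h1.1, h2⟩),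
        kk_of_mem (by linarith) (by linarith [h1.1])]
      ring
    · rw [indicator_of_notMem (by simp [h2]), kk_of_neg (by linarith), zero_mul]
  · rw [indicator_of_notMem h1, indicator_of_notMem, mul_zero]
    intro h
    exact h1 ⟨h.1, h.2.trans htb⟩

theorem cv_bridge {a b α : ℝ} (g : ℝ → ℝ) {t : ℝ} (hat : a ≤ t) (htb : t ≤ b) :
    cv (kk (b - a) α) (indicator (Ioc a b) g) t
      = (1 / Real.Gamma α) * ∫ τ in a..t, (t - τ) ^ (α - 1) * g τ :=
  cv_bridge' le_rfl g hat htb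

theorem beta_int {α : ℝ} (h0 : 0 < α) (h1 : α < 1) {t : ℝ} (ht : 0 < t) :
    ∫ τ in (0:ℝ)..t, (t - τ) ^ (1 - α - 1) * τ ^ (α - 1)
      = Real.Gamma (1 - α) * Real.Gamma α := by
  have h := Complex.betaIntegral_scaled (α : ℂ) ((1 - α : ℝ) : ℂ) ht
  rw [Complex.betaIntegral_eq_Gamma_mul_div _ _ (by simpa) (by simpa using h1)] at h
  have e1 : (α : ℂ) + ((1 - α : ℝ) : ℂ) = 1 := by push_cast; ring
  rw [e1, Complex.Gamma_one, Complex.Gamma_ofReal, Complex.Gamma_ofReal] at h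
  have e2 : ∫ τ in (0:ℝ)..t, (((t - τ) ^ (1 - α - 1) * τ ^ (α - 1) : ℝ) : ℂ)
      = ∫ x in (0:ℝ)..t, (x : ℂ) ^ ((α : ℂ) - 1) * ((t : ℂ) - x) ^ (((1 - α : ℝ) : ℂ) - 1) := by
    apply intervalIntegral.integral_congr
    intro x hx
    rw [uIcc_of_le ht.le] at hx
    simp only
    rw [Complex.ofReal_mul, Complex.ofReal_cpow (by linarith [hx.2]), Complex.ofReal_cpow hx.1]
    push_cast
    ring
  rw [← e2, intervalIntegral.integral_ofReal] at h
  have h' : ((∫ τ in (0:ℝ)..t, (t - τ) ^ (1 - α - 1) * τ ^ (α - 1) : ℝ) : ℂ)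
      = ((Real.Gamma (1 - α) * Real.Gamma α : ℝ) : ℂ) := by
    rw [h]; push_cast
    simp [mul_comm]
  exact_mod_cast h'

theorem cv_kk {α L : ℝ} (h0 : 0 < α) (h1 : α < 1) {t : ℝ} (ht : 0 < t) (htL : t ≤ L) :
    cv (kk L (1 - α)) (kk L α) t = 1 := by
  have e : cv (kk L (1 - α)) (kk L α) t
      = cv (kk (L - 0) (1 - α)) (indicator (Ioc 0 L) (fun x => x ^ (α - 1) / Real.Gamma α)) t := by
    rw [sub_zero]
    apply cv_congr (b := L) _ htL
    filter_upwards [(Measure.ae_ne volume (0:ℝ))] with x hx _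
    unfold kk indicator
    have : x ∈ Icc 0 L ↔ x ∈ Ioc 0 L := by
      constructor
      · intro h; exact ⟨lt_of_le_of_ne h.1 (Ne.symm hx), h.2⟩
      · intro h; exact ⟨h.1.le, h.2⟩
    simp only [this]
  rw [e, cv_bridge _ ht.le htL]
  have := beta_int h0 h1 ht
  simp only [← mul_div_assoc]
  rw [intervalIntegral.integral_div, this]
  have g1 := (Real.Gamma_pos_of_pos h0).ne'
  have g2 := (Real.Gamma_pos_of_pos (show 0 < 1 - α by linarith)).ne'
  field_simp

theorem cv_comm (f g : ℝ → ℝ) : cv f g = cv g f := by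
  ext t
  unfold cv
  rw [← integral_sub_left_eq_self _ volume t]
  simp [mul_comm]

theorem cv_kk_neg {α β L : ℝ} {t : ℝ} (ht : t < 0) : cv (kk L β) (kk L α) t = 0 := by
  unfold cv
  rw [← integral_zero ℝ ℝ]
  congr 1; ext τ
  rcases lt_or_ge τ 0 with h | h
  · rw [kk_of_neg h, mul_zero]
  · rw [kk_of_neg (by linarith), zero_mul]

/-- Convolution with a kernel which is `1` on `(0,L]` and `0` on negatives. -/
theorem cv_one {f : ℝ → ℝ} {a b : ℝ} (hf : ∀ x, 0 < x → x ≤ b - a → f x = 1)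
    (hf' : ∀ x, x < 0 → f x = 0) {g : ℝ → ℝ} (hg : ∀ x, x ≤ a → g x = 0) {t : ℝ} (hat : a ≤ t)
    (htb : t ≤ b) :
    cv f g t = ∫ τ in a..t, g τ := by
  rw [intervalIntegral.integral_of_le hat, ← integral_indicator measurableSet_Ioc]
  unfold cv
  apply integral_congr_ae
  filter_upwards [Measure.ae_ne volume t] with τ hτ
  rcases le_or_gt τ a with h | h
  · rw [hg τ h, indicator_of_notMem (by simp [h]), mul_zero]
  · rcases lt_or_gt_of_ne hτ with h2 | h2
    · rw [indicator_of_mem (show τ ∈ Ioc a t from ⟨h, h2.le⟩), hf _ (by linarith) (by linarith), one_mul]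
    · rw [indicator_of_notMem (by simp [h2]), hf' _ (by linarith), zero_mul]

theorem cv_shift (f g : ℝ → ℝ) (a c t : ℝ) :
    cv f (fun x => g (x - a) * c) t = cv f g (t - a) * c := by
  unfold cv
  rw [← integral_mul_const,
    ← integral_sub_right_eq_self (fun τ => f (t - a - τ) * g τ * c) a]
  congr 1; ext τ
  rw [show t - a - (τ - a) = t - τ by ring]; ring

theorem rl_one {a b α c : ℝ} (hab : a < b) (h0 : 0 < α) (h1 : α < 1) {h : ℝ → ℝ}
    (hh : Integrable h) (hs : ∀ x, x ≤ a → h x = 0) :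
    ∀ᵐ t, t ∈ Ioc a b →
      cv (kk (b - a) (1 - α)) (fun x => kk (b - a) α (x - a) * c + cv (kk (b - a) α) h x) t
        = c + ∫ τ in a..t, h τ := by
  have hL : 0 ≤ b - a := by linarith
  have i1 := kk_integrable hL (show 0 < 1 - α by linarith)
  have i2 := kk_integrable hL h0
  filter_upwards [cv_add i1 ((i2.comp_sub_right a).mul_const c) (cv_integrable i2 hh),
    cv_assoc i1 i2 hh] with t e1 e2 ht
  rw [e1, e2, cv_shift, cv_kk h0 h1 (by linarith [ht.1]) (by linarith [ht.2]), one_mul,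
    cv_one (fun x hx hx' => cv_kk h0 h1 hx hx') (fun x hx => cv_kk_neg hx) hs ht.1.le ht.2]

theorem cv_left {a L α t : ℝ} {h : ℝ → ℝ} (hs : ∀ x, x ≤ a → h x = 0) (ht : t ≤ a) :
    cv (kk L α) h t = 0 := by
  unfold cv
  rw [← integral_zero ℝ ℝ]
  congr 1; ext τ
  rcases le_or_gt τ a with h | h
  · rw [hs τ h, mul_zero]
  · rw [kk_of_neg (by linarith), zero_mul]

theorem ind_left {a b : ℝ} (h : ℝ → ℝ) : ∀ x, x ≤ a → indicator (Ioc a b) h x = 0 := by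
  intro x hx
  exact indicator_of_notMem (fun h => absurd h.1 (not_lt.2 hx)) _

theorem int_ind {a b t : ℝ} (h : ℝ → ℝ) (hat : a ≤ t) (htb : t ≤ b) :
    ∫ τ in a..t, indicator (Ioc a b) h τ = ∫ τ in a..t, h τ := by
  rw [intervalIntegral.integral_of_le hat, intervalIntegral.integral_of_le hat]
  apply setIntegral_congr_fun measurableSet_Ioc
  intro x hx
  exact indicator_of_mem (show x ∈ Ioc a b from ⟨hx.1, hx.2.trans htb⟩) _

theorem rl_of_int {a b α c : ℝ} (hab : a < b) (h0 : 0 < α) (h1 : α ≤ 1) {h q : ℝ → ℝ}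
    (hh : IntegrableOn h (Ioc a b))
    (heq : ∀ᵐ t, t ∈ Ioc a b → q t = (t - a) ^ (α - 1) / Real.Gamma α * c
        + (1 / Real.Gamma α) * ∫ τ in a..t, (t - τ) ^ (α - 1) * h τ) :
    ∀ᵐ t, t ∈ Ioc a b → rlInt a (1 - α) q t = c + ∫ τ in a..t, h τ := by
  rcases eq_or_lt_of_le h1 with rfl | h1
  · filter_upwards [heq] with t ht ht'
    simp [rlInt, ht ht']
  · have hh' : Integrable (indicator (Ioc a b) h) :=
      (integrable_indicator_iff measurableSet_Ioc).2 hh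
    filter_upwards [rl_one (c := c) hab h0 h1 hh' (ind_left h)] with t e1 ht
    rw [int_ind h ht.1.le ht.2] at e1
    rw [← e1 ht]
    unfold rlInt
    rw [if_neg (by linarith), ← cv_bridge q ht.1.le ht.2]
    refine cv_congr (b := b) ?_ ht.2
    filter_upwards [heq, Measure.ae_ne volume a] with x hx hxa hxb
    rcases lt_or_gt_of_ne hxa with h2 | h2
    · rw [ind_left q x h2.le, kk_of_neg (by linarith), cv_left (ind_left h) h2.le]; ring
    · have : x ∈ Ioc a b := ⟨h2, hxb⟩
      rw [indicator_of_mem this, hx this, kk_of_mem (by linarith) (by linarith),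
        cv_bridge h h2.le hxb]

theorem ae_zero_of_int {a b : ℝ} {r : ℝ → ℝ} (hr : Integrable r)
    (h : ∀ᵐ t, t ∈ Ioc a b → ∫ τ in a..t, r τ = 0) : ∀ᵐ t, t ∈ Ioc a b → r t = 0 := by
  have hc : Continuous (fun t => ∫ τ in a..t, r τ) :=
    intervalIntegral.continuous_primitive (fun _ _ => hr.intervalIntegrable) a
  have hz : EqOn (fun t => ∫ τ in a..t, r τ) (fun _ => 0) (Ioo a b) := by
    refine Measure.eqOn_open_of_ae_eq (μ := volume) ?_ isOpen_Ioo hc.continuousOn continuousOn_const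
    rw [EventuallyEq, ae_restrict_iff' measurableSet_Ioo]
    filter_upwards [h] with t ht ht'
    exact ht ⟨ht'.1, ht'.2.le⟩
  filter_upwards [LocallyIntegrable.ae_hasDerivAt_integral hr.locallyIntegrable,
    Measure.ae_ne volume b] with t ht htb ht'
  have h1 : t ∈ Ioo a b := ⟨ht'.1, lt_of_le_of_ne ht'.2 htb⟩
  have h2 := ht a
  have h3 : HasDerivAt (fun t => ∫ τ in a..t, r τ) 0 t := by
    refine (hasDerivAt_const t (0:ℝ)).congr_of_eventuallyEq ?_
    filter_upwards [isOpen_Ioo.mem_nhds h1] with x hx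
    exact hz hx
  exact h2.unique h3

theorem int_of_rl {a b α c : ℝ} (hab : a < b) (h0 : 0 < α) (h1 : α ≤ 1) {h q : ℝ → ℝ}
    (hh : IntegrableOn h (Ioc a b)) (hq : IntegrableOn q (Ioc a b))
    (heq : ∀ᵐ t, t ∈ Ioc a b → rlInt a (1 - α) q t = c + ∫ τ in a..t, h τ) :
    ∀ᵐ t, t ∈ Ioc a b → q t = (t - a) ^ (α - 1) / Real.Gamma α * c
        + (1 / Real.Gamma α) * ∫ τ in a..t, (t - τ) ^ (α - 1) * h τ := by
  rcases eq_or_lt_of_le h1 with rfl | h1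
  · filter_upwards [heq] with t ht ht'
    simpa [rlInt] using ht ht'
  · have hL : 0 ≤ b - a := by linarith
    have i1 := kk_integrable hL (show 0 < 1 - α by linarith)
    have i2 := kk_integrable hL h0
    have hh' : Integrable (indicator (Ioc a b) h) :=
      (integrable_indicator_iff measurableSet_Ioc).2 hh
    have hq' : Integrable (indicator (Ioc a b) q) :=
      (integrable_indicator_iff measurableSet_Ioc).2 hq
    set u : ℝ → ℝ := fun x => kk (b - a) α (x - a) * c
      + cv (kk (b - a) α) (indicator (Ioc a b) h) x with hu
    have hui : Integrable u := ((i2.comp_sub_right a).mul_const c).add (cv_integrable i2 hh')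
    set r : ℝ → ℝ := indicator (Ioi a) (fun x => indicator (Ioc a b) q x - u x) with hr
    have hri : Integrable r := (hq'.sub hui).indicator measurableSet_Ioi
    have hr0 : ∀ x, x ≤ a → r x = 0 := fun x hx => indicator_of_notMem (by simpa using hx) _
    have hrr : ∀ᵐ x, x ≤ b → r x = indicator (Ioc a b) q x - u x := by
      filter_upwards [Measure.ae_ne volume a] with x hxa _
      rcases lt_or_gt_of_ne hxa with h2 | h2
      · rw [hr0 x h2.le, ind_left q x h2.le, hu]
        simp only
        rw [kk_of_neg (by linarith), cv_left (ind_left h) h2.le]; ring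
      · rw [hr, indicator_of_mem (show x ∈ Ioi a from h2)]
    have hz : ∀ᵐ t, t ≤ b → cv (kk (b - a) (1 - α)) r t = 0 := by
      filter_upwards [heq, rl_one (c := c) hab h0 h1 hh' (ind_left h), cv_sub i1 hq' hui]
        with t e1 e2 e3 htb
      rcases le_or_gt t a with h2 | h2
      · exact cv_left hr0 h2
      · have ht : t ∈ Ioc a b := ⟨h2, htb⟩
        rw [cv_congr hrr htb, e3, e2 ht, int_ind h h2.le htb, ← e1 ht, cv_bridge q h2.le htb]
        unfold rlInt
        rw [if_neg (by linarith), sub_self]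
    have hr1 : ∀ᵐ t, t ∈ Ioc a b → ∫ τ in a..t, r τ = 0 := by
      filter_upwards [cv_assoc i2 i1 hri] with t e1 ht
      rw [cv_congr hz ht.2, cv_comm (kk (b - a) α) (kk (b - a) (1 - α)),
        cv_one (fun x hx hx' => cv_kk h0 h1 hx hx') (fun x hx => cv_kk_neg hx) hr0 ht.1.le ht.2] at e1
      rw [← e1]; simp [cv]
    filter_upwards [ae_zero_of_int hri hr1, hrr] with t e1 e2 ht
    have e3 := e2 ht.2
    rw [e1 ht, indicator_of_mem ht, hu] at e3
    simp only at e3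
    rw [kk_of_mem (by linarith [ht.1]) (by linarith [ht.2]), cv_bridge h ht.1.le ht.2] at e3
    linarith

theorem exp_kk_tendsto {L α : ℝ} (hL : 0 ≤ L) (hα : 0 < α) :
    Tendsto (fun n : ℕ => ∫ x, Real.exp (-(n * x)) * kk L α x) atTop (𝓝 0) := by
  rw [← integral_zero ℝ ℝ (μ := volume)]
  refine tendsto_integral_of_dominated_convergence (kk L α) ?_ (kk_integrable hL hα) ?_ ?_
  · intro n
    exact ((by fun_prop : Measurable fun x : ℝ => Real.exp (-(n * x))).mul
      (kk_measurable L α)).aestronglyMeasurable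
  · intro n
    refine Eventually.of_forall fun x => ?_
    rw [Real.norm_eq_abs, abs_mul, Real.abs_exp, abs_of_nonneg (kk_nonneg hα x)]
    rcases lt_or_ge x 0 with h | h
    · rw [kk_of_neg h]; simp
    · have : Real.exp (-(n * x)) ≤ 1 := by
        rw [Real.exp_le_one_iff]
        have : 0 ≤ (n : ℝ) * x := by positivity
        linarith
      exact mul_le_of_le_one_left (kk_nonneg hα x) this
  · filter_upwards [Measure.ae_ne volume (0:ℝ)] with x hx
    rcases lt_or_gt_of_ne hx with h | h
    · rw [kk_of_neg h]; simp
    · have : Tendsto (fun n : ℕ => Real.exp (-(n * x))) atTop (𝓝 0) := by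
        apply Real.tendsto_exp_neg_atTop_nhds_zero.comp
        exact tendsto_natCast_atTop_atTop.atTop_mul_const h
      simpa using this.mul_const (kk L α x)

theorem exp_kk_integrable {L α : ℝ} (hL : 0 ≤ L) (hα : 0 < α) (n : ℕ) :
    Integrable (fun x => Real.exp (-(n * x)) * kk L α x) := by
  refine (kk_integrable hL hα).mono' ((by fun_prop : Measurable fun x : ℝ => Real.exp (-(n * x))).mul
      (kk_measurable L α)).aestronglyMeasurable ?_
  refine Eventually.of_forall fun x => ?_
  rw [Real.norm_eq_abs, abs_mul, Real.abs_exp, abs_of_nonneg (kk_nonneg hα x)]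
  rcases lt_or_ge x 0 with h | h
  · rw [kk_of_neg h]; simp
  · have : Real.exp (-(n * x)) ≤ 1 := by
      rw [Real.exp_le_one_iff]
      have : 0 ≤ (n : ℝ) * x := by positivity
      linarith
    exact mul_le_of_le_one_left (kk_nonneg hα x) this

/-- Gronwall. -/
theorem gronwall_zero {a b : ℝ} (hab : a < b) {m : ℕ} {α : Fin m → ℝ} (hα : ∀ i, 0 < α i)
    {M : ℝ} (hM : 0 ≤ M) {p : Fin m → ℝ → ℝ} (hp : ∀ i, Integrable (p i))
    (hs : ∀ i x, x ∉ Ioc a b → p i x = 0)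
    (hle : ∀ i, ∀ᵐ t, t ∈ Ioc a b →
      |p i t| ≤ cv (kk (b - a) (α i)) (fun τ => M * ∑ j, |p j τ|) t) :
    ∀ i, ∀ᵐ t, p i t = 0 := by
  have hL : 0 ≤ b - a := by linarith
  have hlim : Tendsto (fun n : ℕ => M * ∑ i, ∫ x, Real.exp (-(n * x)) * kk (b - a) (α i) x)
      atTop (𝓝 (M * ∑ i : Fin m, 0)) :=
    (tendsto_finsetSum _ fun i _ => exp_kk_tendsto hL (hα i)).const_mul M
  simp only [Finset.sum_const_zero, mul_zero] at hlim
  obtain ⟨n, hn⟩ := (hlim.eventually_lt_const (show (0:ℝ) < 1 by norm_num)).exists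
  set w : ℝ → ℝ := fun x => Real.exp (-(n * x)) with hw
  have hwm : Measurable w := by fun_prop
  set u : Fin m → ℝ → ℝ := fun i x => w x * |p i x| with hu
  have hui : ∀ i, Integrable (u i) := by
    intro i
    refine ((hp i).norm.const_mul (w a)).mono' (hwm.aestronglyMeasurable.mul (hp i).norm.1) ?_
    refine Eventually.of_forall fun x => ?_
    simp only [hu, norm_mul, Real.norm_eq_abs, abs_abs]
    by_cases hx : x ∈ Ioc a b
    · gcongr
      rw [hw]; simp only [Real.abs_exp]
      apply Real.exp_le_exp.2
      have := mul_le_mul_of_nonneg_left hx.1.le (Nat.cast_nonneg (α := ℝ) n)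
      linarith
    · rw [hs i x hx]; simp
  have hu0 : ∀ i x, 0 ≤ u i x := fun i x => mul_nonneg (Real.exp_pos _).le (abs_nonneg _)
  have hsum : Integrable (fun τ => M * ∑ j, u j τ) :=
    (integrable_finsetSum _ fun j _ => hui j).const_mul M
  have hule : ∀ i, ∀ᵐ t, u i t
      ≤ cv (fun x => w x * kk (b - a) (α i) x) (fun τ => M * ∑ j, u j τ) t := by
    intro i
    filter_upwards [hle i] with t ht
    have e : cv (fun x => w x * kk (b - a) (α i) x) (fun τ => M * ∑ j, u j τ) t
        = w t * cv (kk (b - a) (α i)) (fun τ => M * ∑ j, |p j τ|) t := by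
      unfold cv
      rw [← integral_const_mul]
      congr 1; ext τ
      have : w t = w (t - τ) * w τ := by
        simp only [hw]; rw [← Real.exp_add]; congr 1; ring
      simp only [hu, ← Finset.mul_sum]
      rw [this]; ring
    by_cases ht' : t ∈ Ioc a b
    · rw [e]
      exact mul_le_mul_of_nonneg_left (ht ht') (Real.exp_pos _).le
    · have : u i t = 0 := by simp [hu, hs i t ht']
      rw [this]
      apply integral_nonneg
      intro τ
      exact mul_nonneg (mul_nonneg (Real.exp_pos _).le (kk_nonneg (hα i) _))
        (mul_nonneg hM (Finset.sum_nonneg fun j _ => hu0 j τ))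
  have hint : ∀ i, ∫ t, u i t ≤ (∫ x, w x * kk (b - a) (α i) x) * (M * ∑ j, ∫ t, u j t) := by
    intro i
    have i3 := exp_kk_integrable hL (hα i) n
    refine (integral_mono_ae (hui i) (cv_integrable i3 hsum) (hule i)).trans_eq ?_
    rw [cv_integral i3 hsum, integral_const_mul, integral_finsetSum _ fun j _ => hui j]
  have hN0 : 0 ≤ ∑ j, ∫ t, u j t := Finset.sum_nonneg fun j _ => integral_nonneg (hu0 j)
  have hN : ∑ j, ∫ t, u j t ≤ (M * ∑ i, ∫ x, w x * kk (b - a) (α i) x) * ∑ j, ∫ t, u j t := by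
    calc ∑ j, ∫ t, u j t ≤ ∑ i, (∫ x, w x * kk (b - a) (α i) x) * (M * ∑ j, ∫ t, u j t) :=
          Finset.sum_le_sum fun i _ => hint i
      _ = _ := by rw [← Finset.sum_mul]; ring
  have hNz : ∑ j, ∫ t, u j t = 0 := by
    by_contra hne
    have : 0 < ∑ j, ∫ t, u j t := lt_of_le_of_ne hN0 (Ne.symm hne)
    have h3 := mul_lt_mul_of_pos_right hn this
    linarith
  intro i
  have hi := (Finset.sum_eq_zero_iff_of_nonneg fun j _ => integral_nonneg (hu0 j)).1 hNz i
    (Finset.mem_univ i)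
  have := (integral_eq_zero_iff_of_nonneg (hu0 i) (hui i)).1 hi
  filter_upwards [this] with t ht
  have ht : w t * |p i t| = 0 := ht
  rcases mul_eq_zero.1 ht with h | h
  · exact absurd h (Real.exp_pos _).ne'
  · exact abs_eq_zero.1 h

theorem cv_sum {m : ℕ} {f : ℝ → ℝ} (hf : Integrable f) {g : Fin m → ℝ → ℝ}
    (hg : ∀ j, Integrable (g j)) (c : Fin m → ℝ) :
    ∀ᵐ t, cv f (fun x => ∑ j, g j x * c j) t = ∑ j, cv f (g j) t * c j := by
  have := fun j => cv_exists hf (hg j)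
  rw [← ae_all_iff] at this
  filter_upwards [this] with t ht
  unfold cv
  simp only [Finset.mul_sum, ← integral_mul_const, ← mul_assoc]
  rw [integral_finsetSum]
  intro j _
  exact (ht j).mul_const _

theorem duhamel_core {a b : ℝ} (hab : a < b) {m : ℕ} {α : Fin m → ℝ} (hα : ∀ i, 0 < α i)
    {Θ M N : ℝ} (hΘ : 0 ≤ Θ) (hM : 0 ≤ M) (hN : 0 ≤ N)
    (A : Fin m → Fin m → ℝ → ℝ) (hAm : ∀ i j, Measurable (A i j)) (hAb : ∀ i j t, |A i j t| ≤ M)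
    (B : Fin m → ℝ → ℝ) (hBm : ∀ i, Measurable (B i)) (hBb : ∀ i t, |B i t| ≤ N)
    (hBs : ∀ i t, t ∉ Ioc a b → B i t = 0)
    (Z : Fin m → Fin m → ℝ → ℝ → ℝ) (hZm : ∀ i j, Measurable (fun p : ℝ × ℝ => Z i j p.1 p.2))
    (hZb : ∀ i j t s, |Z i j t s| ≤ Θ * kk (b - a) (α i) (t - s))
    (hZ : ∀ s ∈ Ico a b, ∀ᵐ t, t ∈ Ioc a b → ∀ i j,
      Z i j t s = kk (b - a) (α i) (t - s) * (if i = j then (1:ℝ) else 0)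
        + cv (kk (b - a) (α i)) (fun τ => ∑ k, A i k τ * Z k j τ s) t)
    (qa : Fin m → ℝ) (q : Fin m → ℝ → ℝ)
    (hq : q = fun i t => ∑ j, Z i j t a * qa j + ∫ s, ∑ j, Z i j t s * B j s) :
    (∀ i, Integrable (q i)) ∧ ∀ᵐ t, t ∈ Ioc a b → ∀ i,
      q i t = kk (b - a) (α i) (t - a) * qa i
        + cv (kk (b - a) (α i)) (fun τ => ∑ k, A i k τ * q k τ + B i τ) t := by
  have hL : 0 ≤ b - a := by linarith
  have ik := fun i => kk_integrable hL (hα i)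
  have mk := fun i => kk_measurable (b - a) (α i)
  have hZ1 : ∀ i j s, Integrable (fun t => Z i j t s) := by
    intro i j s
    refine (((ik i).comp_sub_right s).const_mul Θ).mono'
      ((hZm i j).comp (by fun_prop : Measurable fun t : ℝ => (t, s))).aestronglyMeasurable ?_
    exact Eventually.of_forall fun t => hZb i j t s
  -- multiplication by the bounded `A`
  have hAi : ∀ i k (f : ℝ → ℝ), Integrable f → Integrable (fun t => A i k t * f t) := by
    intro i k f hf
    exact hf.bdd_mul (hAm i k).aestronglyMeasurable (Eventually.of_forall fun t => hAb i k t)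
  have hAs : ∀ i (f : Fin m → ℝ → ℝ), (∀ k, Integrable (f k)) →
      Integrable (fun t => ∑ k, A i k t * f k t) := by
    intro i f hf
    exact integrable_finsetSum _ fun k _ => hAi i k (f k) (hf k)
  -- linear combinations of columns
  have step : ∀ s ∈ Ico a b, ∀ c : Fin m → ℝ, ∀ᵐ t, t ∈ Ioc a b → ∀ i,
      ∑ j, Z i j t s * c j = kk (b - a) (α i) (t - s) * c i
        + cv (kk (b - a) (α i)) (fun τ => ∑ k, A i k τ * ∑ j, Z k j τ s * c j) t := by
    intro s hs c
    have h1 : ∀ i, ∀ᵐ t, cv (kk (b - a) (α i)) (fun τ => ∑ j, (∑ k, A i k τ * Z k j τ s) * c j) t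
        = ∑ j, cv (kk (b - a) (α i)) (fun τ => ∑ k, A i k τ * Z k j τ s) t * c j := fun i =>
      cv_sum (ik i) (fun j => hAs i (fun k t => Z k j t s) (fun k => hZ1 k j s)) c
    rw [← ae_all_iff] at h1
    filter_upwards [h1, hZ s hs] with t h1 h2 ht i
    have e : (fun τ => ∑ k, A i k τ * ∑ j, Z k j τ s * c j)
        = (fun τ => ∑ j, (∑ k, A i k τ * Z k j τ s) * c j) := by
      ext τ
      simp only [Finset.mul_sum, Finset.sum_mul]
      rw [Finset.sum_comm]
      simp only [mul_assoc]
    rw [e, h1 i]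
    simp only [h2 ht i, add_mul, Finset.sum_add_distrib]
    congr 1
    simp [mul_assoc]
  -- the integrand
  set V : Fin m → ℝ → ℝ → ℝ := fun i t s => ∑ j, Z i j t s * B j s with hV
  have hVm : ∀ i, Measurable (fun p : ℝ × ℝ => V i p.1 p.2) := by
    intro i
    refine Finset.measurable_fun_sum _ fun j _ => (hZm i j).mul ((hBm j).comp measurable_snd)
  set C : ℝ := m * (Θ * N) with hC
  have hC0 : 0 ≤ C := by positivity
  have hVb : ∀ i t s, |V i t s| ≤ C * kk (b - a) (α i) (t - s) := by
    intro i t s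
    calc |V i t s| ≤ ∑ j, |Z i j t s * B j s| := Finset.abs_sum_le_sum_abs _ _
      _ ≤ ∑ j : Fin m, (Θ * kk (b - a) (α i) (t - s)) * N := by
          apply Finset.sum_le_sum
          intro j _
          rw [abs_mul]
          exact mul_le_mul (hZb i j t s) (hBb j s) (abs_nonneg _)
            (mul_nonneg hΘ (kk_nonneg (hα i) _))
      _ = _ := by simp [hC]; ring
  have hVs : ∀ i t s, s ∉ Ioc a b → V i t s = 0 := by
    intro i t s hs
    simp [hV, hBs _ s hs]
  have hV2 : ∀ i t, Integrable (fun s => V i t s) := by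
    intro i t
    refine (((ik i).comp_sub_left t).const_mul C).mono'
      ((hVm i).comp (by fun_prop : Measurable fun s : ℝ => (t, s))).aestronglyMeasurable ?_
    exact Eventually.of_forall fun s => hVb i t s
  have hVp : ∀ i, Integrable (fun p : ℝ × ℝ => V i p.1 p.2) (volume.prod volume) := by
    intro i
    have i1 : Integrable (indicator (Ioc a b) (fun _ => (1:ℝ))) :=
      (integrable_indicator_iff measurableSet_Ioc).2 (by simp)
    refine ((i1.convolution_integrand (ContinuousLinearMap.mul ℝ ℝ) (ik i)).const_mul C).mono'
      (hVm i).aestronglyMeasurable ?_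
    refine Eventually.of_forall fun p => ?_
    simp only [ContinuousLinearMap.mul_apply', Real.norm_eq_abs]
    by_cases hp : p.2 ∈ Ioc a b
    · rw [indicator_of_mem hp, one_mul]; exact hVb i p.1 p.2
    · rw [hVs i _ _ hp, indicator_of_notMem hp]; simp
  set W : Fin m → ℝ → ℝ := fun i t => ∫ s, V i t s with hW
  have hWi : ∀ i, Integrable (W i) := fun i => (hVp i).integral_prod_left
  set Y : Fin m → ℝ → ℝ := fun i t => ∑ j, Z i j t a * qa j with hY
  have hYi : ∀ i, Integrable (Y i) := fun i =>
    integrable_finsetSum _ fun j _ => (hZ1 i j a).mul_const _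
  have hqe : ∀ i, q i = fun t => Y i t + W i t := by intro i; rw [hq]
  have hqi : ∀ i, Integrable (q i) := by
    intro i; rw [hqe i]; exact (hYi i).add (hWi i)
  refine ⟨hqi, ?_⟩
  -- the swap of quantifiers
  have sw : ∀ᵐ t, ∀ᵐ s, s ∈ Ico a b → t ∈ Ioc a b → ∀ i,
      V i t s = kk (b - a) (α i) (t - s) * B i s
        + ∫ τ, kk (b - a) (α i) (t - τ) * ∑ k, A i k τ * V k τ s := by
    rw [Measure.ae_ae_comm]
    · refine Eventually.of_forall fun s => ?_
      by_cases hs : s ∈ Ico a b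
      · filter_upwards [step s hs (fun j => B j s)] with t ht _
        exact ht
      · exact Eventually.of_forall fun t h => absurd h hs
    · have hm : ∀ i, Measurable (fun p : ℝ × ℝ =>
          ∫ τ, kk (b - a) (α i) (p.1 - τ) * ∑ k, A i k τ * V k τ p.2) := by
        intro i
        have : Measurable (fun x : (ℝ × ℝ) × ℝ =>
            kk (b - a) (α i) (x.1.1 - x.2) * ∑ k, A i k x.2 * V k x.2 x.1.2) := by
          refine ((mk i).comp (by fun_prop)).mul (Finset.measurable_fun_sum _ fun k _ => ?_)
          refine ((hAm i k).comp measurable_snd).mul ?_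
          exact (hVm k).comp (by fun_prop : Measurable fun x : (ℝ × ℝ) × ℝ => (x.2, x.1.2))
        exact this.stronglyMeasurable.integral_prod_right'.measurable
      have e : {x : ℝ × ℝ | x.2 ∈ Ico a b → x.1 ∈ Ioc a b → ∀ i,
          V i x.1 x.2 = kk (b - a) (α i) (x.1 - x.2) * B i x.2
          + ∫ τ, kk (b - a) (α i) (x.1 - τ) * ∑ k, A i k τ * V k τ x.2}
          = {x | x.2 ∈ Ico a b}ᶜ ∪ ({x | x.1 ∈ Ioc a b}ᶜ ∪ ⋂ i, {x |
          V i x.1 x.2 = kk (b - a) (α i) (x.1 - x.2) * B i x.2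
          + ∫ τ, kk (b - a) (α i) (x.1 - τ) * ∑ k, A i k τ * V k τ x.2}) := by
        ext x
        simp only [mem_ofPred_eq, mem_union, mem_compl_iff, mem_iInter]
        tauto
      rw [e]
      refine (measurable_snd measurableSet_Ico).compl.union
        ((measurable_fst measurableSet_Ioc).compl.union (MeasurableSet.iInter fun i => ?_))
      refine measurableSet_eq_fun (hVm i) (Measurable.add ?_ (hm i))
      exact ((mk i).comp (by fun_prop)).mul ((hBm i).comp measurable_snd)
  have hBi : ∀ i, Integrable (B i) := by
    intro i
    have : B i = indicator (Ioc a b) (B i) := by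
      ext t
      by_cases ht : t ∈ Ioc a b
      · rw [indicator_of_mem ht]
      · rw [indicator_of_notMem ht, hBs i t ht]
    rw [this, integrable_indicator_iff measurableSet_Ioc]
    refine Integrable.mono' (g := fun _ => N) (by simp) (hBm i).aestronglyMeasurable ?_
    exact Eventually.of_forall fun t => hBb i t
  have hWe : ∀ᵐ t, t ∈ Ioc a b → ∀ i, W i t = cv (kk (b - a) (α i)) (B i) t
      + cv (kk (b - a) (α i)) (fun τ => ∑ k, A i k τ * W k τ) t := by
    filter_upwards [sw] with t hsw ht i
    set G : ℝ → ℝ → ℝ := fun s τ => kk (b - a) (α i) (t - τ) * ∑ k, A i k τ * V k τ s with hG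
    have hGm : Measurable (fun p : ℝ × ℝ => G p.1 p.2) := by
      refine ((mk i).comp (by fun_prop)).mul (Finset.measurable_fun_sum _ fun k _ => ?_)
      refine ((hAm i k).comp measurable_snd).mul ?_
      exact (hVm k).comp (by fun_prop : Measurable fun x : ℝ × ℝ => (x.2, x.1))
    have hGi : Integrable (fun p : ℝ × ℝ => G p.1 p.2) (volume.prod volume) := by
      have i1 : ∀ k, Integrable (fun p : ℝ × ℝ =>
          kk (b - a) (α i) (t - p.2) * kk (b - a) (α k) (p.2 - p.1)) (volume.prod volume) := by
        intro k
        have := ((ik i).comp_sub_left t).convolution_integrand (ContinuousLinearMap.mul ℝ ℝ)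
          (ik k).comp_neg
        simpa using this
      refine (integrable_finsetSum Finset.univ fun k _ => (i1 k).const_mul (M * C)).mono'
        hGm.aestronglyMeasurable ?_
      refine Eventually.of_forall fun p => ?_
      simp only [hG, Real.norm_eq_abs, abs_mul, abs_of_nonneg (kk_nonneg (hα i) _)]
      calc kk (b - a) (α i) (t - p.2) * |∑ k, A i k p.2 * V k p.2 p.1|
          ≤ kk (b - a) (α i) (t - p.2) * ∑ k, M * (C * kk (b - a) (α k) (p.2 - p.1)) := by
            refine mul_le_mul_of_nonneg_left ?_ (kk_nonneg (hα i) _)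
            refine (Finset.abs_sum_le_sum_abs _ _).trans (Finset.sum_le_sum fun k _ => ?_)
            rw [abs_mul]
            exact mul_le_mul (hAb i k _) (hVb k _ _) (abs_nonneg _) hM
        _ = _ := by
            rw [Finset.mul_sum]
            exact Finset.sum_congr rfl fun k _ => by ring
    have e1 : W i t = ∫ s, (kk (b - a) (α i) (t - s) * B i s + ∫ τ, G s τ) := by
      apply integral_congr_ae
      filter_upwards [hsw, Measure.ae_ne volume b] with s hs hsb
      by_cases hs' : s ∈ Ioc a b
      · exact hs ⟨hs'.1.le, lt_of_le_of_ne hs'.2 hsb⟩ ht i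
      · simp [hG, hVs _ _ s hs', hBs i s hs']
    have i2 : Integrable (fun s => kk (b - a) (α i) (t - s) * B i s) := by
      refine Integrable.mul_bdd ((ik i).comp_sub_left t) (hBm i).aestronglyMeasurable
        (Eventually.of_forall fun s => hBb i s)
    rw [e1, integral_add i2 hGi.integral_prod_left, integral_integral_swap hGi]
    unfold cv
    congr 2
    ext τ
    simp only [hG]
    rw [integral_const_mul, integral_finsetSum _ fun k _ => (hV2 k τ).const_mul _]
    simp only [integral_const_mul, hW]
  -- conclusion
  have c1 : ∀ i, ∀ᵐ t, cv (kk (b - a) (α i)) (fun τ => ∑ k, A i k τ * q k τ + B i τ) t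
      = cv (kk (b - a) (α i)) (fun τ => ∑ k, A i k τ * q k τ) t + cv (kk (b - a) (α i)) (B i) t :=
    fun i => cv_add (ik i) (hAs i q hqi) (hBi i)
  have c2 : ∀ i, ∀ᵐ t,
      cv (kk (b - a) (α i)) (fun τ => ∑ k, A i k τ * Y k τ + ∑ k, A i k τ * W k τ) t
      = cv (kk (b - a) (α i)) (fun τ => ∑ k, A i k τ * Y k τ) t
        + cv (kk (b - a) (α i)) (fun τ => ∑ k, A i k τ * W k τ) t :=
    fun i => cv_add (ik i) (hAs i Y hYi) (hAs i W hWi)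
  rw [← ae_all_iff] at c1 c2
  filter_upwards [c1, c2, hWe, step a ⟨le_rfl, hab⟩ qa] with t c1 c2 hWt hYt ht i
  have e : (fun τ => ∑ k, A i k τ * q k τ)
      = fun τ => ∑ k, A i k τ * Y k τ + ∑ k, A i k τ * W k τ := by
    ext τ
    rw [← Finset.sum_add_distrib]
    refine Finset.sum_congr rfl fun k _ => ?_
    rw [hqe k]; ring
  have hY' : Y i t = kk (b - a) (α i) (t - a) * qa i
        + cv (kk (b - a) (α i)) (fun τ => ∑ k, A i k τ * Y k τ) t := hYt ht i
  rw [c1 i, e, c2 i, hqe i]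
  simp only
  rw [hY', hWt ht i]
  ring

theorem local_duhamel {a b : ℝ} (hab : a < b) {m : ℕ} {α : Fin m → ℝ} (hα : ∀ i, 0 < α i)
    (qa : Fin m → ℝ) (A : ℝ → Matrix (Fin m) (Fin m) ℝ) (B : ℝ → Fin m → ℝ)
    (hAmeas : ∀ i j, Measurable fun t => A t i j) {M N Θ : ℝ} (hM : 0 ≤ M) (hN : 0 ≤ N)
    (hΘ : 0 ≤ Θ)
    (hA : ∀ᵐ t, t ∈ Ioc a b → ∀ i j, |A t i j| ≤ M)
    (hBmeas : ∀ i, Measurable fun t => B t i)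
    (hB : ∀ᵐ t, t ∈ Ioc a b → ∀ i, |B t i| ≤ N)
    (Z : ℝ → ℝ → Matrix (Fin m) (Fin m) ℝ)
    (hZmeas : ∀ i j, Measurable fun p : ℝ × ℝ => Z p.1 p.2 i j)
    (hZeq : ∀ s ∈ Ico a b, ∀ᵐ t, t ∈ Ioc a b → s < t → ∀ i j,
      Z t s i j = (t - s) ^ (α i - 1) / Real.Gamma (α i) * (if i = j then (1:ℝ) else 0)
        + (1 / Real.Gamma (α i)) *
            ∫ τ in s..t, (t - τ) ^ (α i - 1) * ∑ k, A τ i k * Z τ s k j)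
    (hZb : ∀ s ∈ Ico a b, ∀ᵐ t, t ∈ Ioc a b → s < t → ∀ i j,
        |Z t s i j| ≤ (t - s) ^ (α i - 1) * Θ)
    (q : ℝ → Fin m → ℝ)
    (hq : ∀ᵐ t, t ∈ Ioc a b → ∀ i,
      q t i = (∑ j, Z t a i j * qa j) + ∫ s in a..t, ∑ j, Z t s i j * B s j) :
    (∀ i, IntegrableOn (fun t => q t i) (Ioc a b)) ∧
    (∀ᵐ t, t ∈ Ioc a b → ∀ i,
      q t i = (t - a) ^ (α i - 1) / Real.Gamma (α i) * qa i
        + (1 / Real.Gamma (α i)) *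
            ∫ τ in a..t, (t - τ) ^ (α i - 1) * ((∑ j, A τ i j * q τ j) + B τ i)) := by
  classical
  set Ah : Fin m → Fin m → ℝ → ℝ :=
    fun i j t => if t ∈ Ioc a b ∧ |A t i j| ≤ M then A t i j else 0 with hAh
  set Bh : Fin m → ℝ → ℝ :=
    fun i t => if t ∈ Ioc a b ∧ |B t i| ≤ N then B t i else 0 with hBh
  set Zh : Fin m → Fin m → ℝ → ℝ → ℝ := fun i j t s =>
    if (a ≤ s ∧ s < t ∧ t ≤ b) ∧ |Z t s i j| ≤ (t - s) ^ (α i - 1) * Θ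
    then Z t s i j else 0 with hZh
  set Θ' : ℝ := Θ * ∑ i, Real.Gamma (α i) with hΘ'
  have hG0 : ∀ i, 0 < Real.Gamma (α i) := fun i => Real.Gamma_pos_of_pos (hα i)
  have hΘ'0 : 0 ≤ Θ' := mul_nonneg hΘ (Finset.sum_nonneg fun i _ => (hG0 i).le)
  have hAm : ∀ i j, Measurable (Ah i j) := by
    intro i j
    refine Measurable.ite ?_ (hAmeas i j) measurable_const
    exact measurableSet_Ioc.inter (measurableSet_le (hAmeas i j).abs measurable_const)
  have hBm : ∀ i, Measurable (Bh i) := by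
    intro i
    refine Measurable.ite ?_ (hBmeas i) measurable_const
    exact measurableSet_Ioc.inter (measurableSet_le (hBmeas i).abs measurable_const)
  have hZm : ∀ i j, Measurable (fun p : ℝ × ℝ => Zh i j p.1 p.2) := by
    intro i j
    refine Measurable.ite ?_ (hZmeas i j) measurable_const
    refine ((measurableSet_le measurable_const measurable_snd).inter
      ((measurableSet_lt measurable_snd measurable_fst).inter
      (measurableSet_le measurable_fst measurable_const))).inter
      (measurableSet_le (hZmeas i j).abs ?_)
    fun_prop
  have hAb : ∀ i j t, |Ah i j t| ≤ M := by
    intro i j t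
    simp only [hAh]
    split_ifs with h
    · exact h.2
    · simpa using hM
  have hBb : ∀ i t, |Bh i t| ≤ N := by
    intro i t
    simp only [hBh]
    split_ifs with h
    · exact h.2
    · simpa using hN
  have hBs : ∀ i t, t ∉ Ioc a b → Bh i t = 0 := by
    intro i t ht
    simp only [hBh]
    rw [if_neg (fun h => ht h.1)]
  have hAs : ∀ i j t, t ∉ Ioc a b → Ah i j t = 0 := by
    intro i j t ht
    simp only [hAh]
    rw [if_neg (fun h => ht h.1)]
  have hZs : ∀ i j t s, t ≤ s → Zh i j t s = 0 := by
    intro i j t s hts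
    simp only [hZh]
    rw [if_neg (fun h => absurd h.1.2.1 (not_lt.2 hts))]
  have hZbd : ∀ i j t s, |Zh i j t s| ≤ Θ' * kk (b - a) (α i) (t - s) := by
    intro i j t s
    simp only [hZh]
    split_ifs with h
    · refine h.2.trans ?_
      rw [kk_of_mem (by linarith [h.1.2.1]) (by linarith [h.1.1, h.1.2.2])]
      have h1 : Real.Gamma (α i) ≤ ∑ i, Real.Gamma (α i) :=
        Finset.single_le_sum (f := fun i => Real.Gamma (α i)) (fun i _ => (hG0 i).le)
          (Finset.mem_univ i)
      have h2 : 0 ≤ (t - s) ^ (α i - 1) := Real.rpow_nonneg (by linarith [h.1.2.1]) _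
      have h3 := (hG0 i).ne'
      calc (t - s) ^ (α i - 1) * Θ
          = Θ * Real.Gamma (α i) * ((t - s) ^ (α i - 1) / Real.Gamma (α i)) := by
            field_simp
        _ ≤ _ := by
            apply mul_le_mul_of_nonneg_right _ (div_nonneg h2 (hG0 i).le)
            exact mul_le_mul_of_nonneg_left h1 hΘ
    · simpa using mul_nonneg hΘ'0 (kk_nonneg (hα i) _)
  have hAe : ∀ᵐ t, t ∈ Ioc a b → ∀ i j, Ah i j t = A t i j := by
    filter_upwards [hA] with t ht ht' i j
    exact if_pos ⟨ht', ht ht' i j⟩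
  have hBe : ∀ᵐ t, t ∈ Ioc a b → ∀ i, Bh i t = B t i := by
    filter_upwards [hB] with t ht ht' i
    exact if_pos ⟨ht', ht ht' i⟩
  have hZe : ∀ s ∈ Ico a b, ∀ᵐ t, t ∈ Ioc a b → s < t → ∀ i j, Zh i j t s = Z t s i j := by
    intro s hs
    filter_upwards [hZb s hs] with t ht ht' hst i j
    exact if_pos ⟨⟨hs.1, hst, ht'.2⟩, ht ht' hst i j⟩
  have hZ : ∀ s ∈ Ico a b, ∀ᵐ t, t ∈ Ioc a b → ∀ i j,
      Zh i j t s = kk (b - a) (α i) (t - s) * (if i = j then (1:ℝ) else 0)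
        + cv (kk (b - a) (α i)) (fun τ => ∑ k, Ah i k τ * Zh k j τ s) t := by
    intro s hs
    have hg : ∀ i j, ∀ᵐ τ, τ ≤ b → ∑ k, Ah i k τ * Zh k j τ s
        = indicator (Ioc s b) (fun τ => ∑ k, A τ i k * Z τ s k j) τ := by
      intro i j
      filter_upwards [hAe, hZe s hs] with τ h1 h2 hτ
      rcases le_or_gt τ s with h | h
      · rw [ind_left _ τ h]
        exact Finset.sum_eq_zero fun k _ => by rw [hZs k j τ s h, mul_zero]
      · have hτ' : τ ∈ Ioc a b := ⟨lt_of_le_of_lt hs.1 h, hτ⟩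
        rw [indicator_of_mem (show τ ∈ Ioc s b from ⟨h, hτ⟩)]
        exact Finset.sum_congr rfl fun k _ => by rw [h1 hτ' i k, h2 hτ' h k j]
    filter_upwards [hZeq s hs, hZe s hs, Measure.ae_ne volume s] with t h1 h2 hts ht i j
    rw [cv_congr (hg i j) ht.2]
    rcases lt_or_gt_of_ne hts with h | h
    · rw [hZs i j t s h.le, kk_of_neg (by linarith), cv_left (ind_left _) h.le]
      ring
    · rw [h2 ht h i j, h1 ht h i j, kk_of_mem (by linarith) (by linarith [hs.1, ht.2]),
        cv_bridge' (by linarith [hs.1]) _ h.le ht.2]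
  obtain ⟨hqi, hqf⟩ := duhamel_core hab hα hΘ'0 hM hN Ah hAm hAb Bh hBm hBb hBs Zh hZm hZbd hZ qa _ rfl
  set qh : Fin m → ℝ → ℝ :=
    fun i t => ∑ j, Zh i j t a * qa j + ∫ s, ∑ j, Zh i j t s * Bh j s with hqh
  have sw : ∀ᵐ t, ∀ᵐ s, s ∈ Ico a b → t ∈ Ioc a b → s < t → ∀ i j, Zh i j t s = Z t s i j := by
    rw [Measure.ae_ae_comm]
    · refine Eventually.of_forall fun s => ?_
      by_cases hs : s ∈ Ico a b
      · filter_upwards [hZe s hs] with t ht _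
        exact ht
      · exact Eventually.of_forall fun t h => absurd h hs
    · have e : {x : ℝ × ℝ | x.2 ∈ Ico a b → x.1 ∈ Ioc a b → x.2 < x.1 → ∀ i j,
          Zh i j x.1 x.2 = Z x.1 x.2 i j}
          = {x | x.2 ∈ Ico a b}ᶜ ∪ ({x | x.1 ∈ Ioc a b}ᶜ ∪ ({x | x.2 < x.1}ᶜ ∪ ⋂ i, ⋂ j, {x |
            Zh i j x.1 x.2 = Z x.1 x.2 i j})) := by
        ext x
        simp only [mem_ofPred_eq, mem_union, mem_compl_iff, mem_iInter]
        tauto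
      rw [e]
      refine (measurable_snd measurableSet_Ico).compl.union
        ((measurable_fst measurableSet_Ioc).compl.union
        ((measurableSet_lt measurable_snd measurable_fst).compl.union
        (MeasurableSet.iInter fun i => MeasurableSet.iInter fun j => ?_)))
      exact measurableSet_eq_fun (hZm i j) (hZmeas i j)
  have hqe : ∀ᵐ t, t ∈ Ioc a b → ∀ i, qh i t = q t i := by
    filter_upwards [hq, sw, hZe a ⟨le_rfl, hab⟩] with t h1 h2 h3 ht i
    rw [h1 ht i, hqh]
    simp only
    congr 1
    · exact Finset.sum_congr rfl fun j _ => by rw [h3 ht ht.1 i j]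
    · rw [intervalIntegral.integral_of_le ht.1.le, ← integral_indicator measurableSet_Ioc]
      apply integral_congr_ae
      filter_upwards [h2, hBe, Measure.ae_ne volume t] with s h4 h5 hst
      by_cases hs : s ∈ Ioc a t
      · have hlt : s < t := lt_of_le_of_ne hs.2 hst
        have hs' : s ∈ Ioc a b := ⟨hs.1, hs.2.trans ht.2⟩
        rw [indicator_of_mem hs]
        exact Finset.sum_congr rfl fun j _ => by
          rw [h4 ⟨hs.1.le, lt_of_lt_of_le hlt ht.2⟩ ht hlt i j, h5 hs' j]
      · rw [indicator_of_notMem hs]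
        refine Finset.sum_eq_zero fun j _ => ?_
        rcases le_or_gt s a with h | h
        · rw [hBs j s (fun h' => absurd h'.1 (not_lt.2 h)), mul_zero]
        · have : t ≤ s := by
            by_contra h'
            exact hs ⟨h, (not_le.1 h').le⟩
          rw [hZs i j t s this, zero_mul]
  constructor
  · intro i
    refine (hqi i).integrableOn.congr_fun_ae ?_
    rw [EventuallyEq, ae_restrict_iff' measurableSet_Ioc]
    filter_upwards [hqe] with t h1 ht
    exact h1 ht i
  · have hg : ∀ i, ∀ᵐ τ, τ ≤ b → ∑ k, Ah i k τ * qh k τ + Bh i τ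
        = indicator (Ioc a b) (fun τ => (∑ j, A τ i j * q τ j) + B τ i) τ := by
      intro i
      filter_upwards [hAe, hBe, hqe] with τ h1 h2 h3 hτ
      by_cases h : τ ∈ Ioc a b
      · rw [indicator_of_mem h, h2 h i]
        congr 1
        exact Finset.sum_congr rfl fun k _ => by rw [h1 h i k, h3 h k]
      · rw [indicator_of_notMem h, hBs i τ h, add_zero]
        exact Finset.sum_eq_zero fun k _ => by rw [hAs i k τ h, zero_mul]
    filter_upwards [hqf, hqe] with t h1 h2 ht i
    have h1' : qh i t = kk (b - a) (α i) (t - a) * qa i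
        + cv (kk (b - a) (α i)) (fun τ => ∑ k, Ah i k τ * qh k τ + Bh i τ) t := h1 ht i
    rw [← h2 ht i, h1', cv_congr (hg i) ht.2, cv_bridge _ ht.1.le ht.2,
      kk_of_mem (by linarith [ht.1]) (by linarith [ht.2])]

theorem local_unique {a b : ℝ} (hab : a < b) {m : ℕ} {α : Fin m → ℝ} (hα : ∀ i, 0 < α i)
    (qa : Fin m → ℝ) (A : ℝ → Matrix (Fin m) (Fin m) ℝ) (B : ℝ → Fin m → ℝ)
    {M : ℝ} (hM : 0 ≤ M)
    (hA : ∀ᵐ t, t ∈ Ioc a b → ∀ i j, |A t i j| ≤ M)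
    (q q' : ℝ → Fin m → ℝ) (h h' : Fin m → ℝ → ℝ)
    (hqi : ∀ i, IntegrableOn (fun t => q t i) (Ioc a b))
    (hqi' : ∀ i, IntegrableOn (fun t => q' t i) (Ioc a b))
    (hhi : ∀ i, IntegrableOn (h i) (Ioc a b))
    (hhi' : ∀ i, IntegrableOn (h' i) (Ioc a b))
    (hh : ∀ i, ∀ᵐ t, t ∈ Ioc a b → h i t = (∑ j, A t i j * q t j) + B t i)
    (hh' : ∀ i, ∀ᵐ t, t ∈ Ioc a b → h' i t = (∑ j, A t i j * q' t j) + B t i)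
    (he : ∀ i, ∀ᵐ t, t ∈ Ioc a b → q t i = (t - a) ^ (α i - 1) / Real.Gamma (α i) * qa i
        + (1 / Real.Gamma (α i)) * ∫ τ in a..t, (t - τ) ^ (α i - 1) * h i τ)
    (he' : ∀ i, ∀ᵐ t, t ∈ Ioc a b → q' t i = (t - a) ^ (α i - 1) / Real.Gamma (α i) * qa i
        + (1 / Real.Gamma (α i)) * ∫ τ in a..t, (t - τ) ^ (α i - 1) * h' i τ) :
    ∀ᵐ t, t ∈ Ioc a b → q' t = q t := by
  have hL : 0 ≤ b - a := by linarith
  set p : Fin m → ℝ → ℝ := fun i => indicator (Ioc a b) (fun t => q' t i - q t i) with hp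
  have hpi : ∀ i, Integrable (p i) := fun i =>
    (integrable_indicator_iff measurableSet_Ioc).2 ((hqi' i).sub (hqi i))
  have hps : ∀ i x, x ∉ Ioc a b → p i x = 0 := fun i x hx => indicator_of_notMem hx _
  have hz := gronwall_zero hab hα hM hpi hps (by
    intro i
    have ik := kk_integrable hL (hα i)
    have i1 : Integrable (indicator (Ioc a b) (h i)) :=
      (integrable_indicator_iff measurableSet_Ioc).2 (hhi i)
    have i2 : Integrable (indicator (Ioc a b) (h' i)) :=
      (integrable_indicator_iff measurableSet_Ioc).2 (hhi' i)
    have i3 : Integrable (fun τ => M * ∑ j, |p j τ|) :=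
      (integrable_finsetSum _ fun j _ => (hpi j).abs).const_mul M
    filter_upwards [he i, he' i, cv_sub ik i2 i1, cv_exists ik i3] with t e1 e2 e3 e4 ht
    have : p i t = cv (kk (b - a) (α i))
        (fun x => indicator (Ioc a b) (h' i) x - indicator (Ioc a b) (h i) x) t := by
      rw [e3, cv_bridge _ ht.1.le ht.2, cv_bridge _ ht.1.le ht.2, hp]
      simp only
      rw [indicator_of_mem ht, e1 ht, e2 ht]
      ring
    rw [this, ← Real.norm_eq_abs]
    unfold cv
    refine norm_integral_le_of_norm_le e4 ?_
    filter_upwards [hA, hh i, hh' i] with τ f1 f2 f3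
    rw [norm_mul, Real.norm_eq_abs, Real.norm_eq_abs, abs_of_nonneg (kk_nonneg (hα i) _)]
    refine mul_le_mul_of_nonneg_left ?_ (kk_nonneg (hα i) _)
    by_cases hτ : τ ∈ Ioc a b
    · have hpτ : ∀ j, p j τ = q' τ j - q τ j := fun j => indicator_of_mem hτ _
      rw [indicator_of_mem hτ, indicator_of_mem hτ, f2 hτ, f3 hτ, add_sub_add_right_eq_sub,
        ← Finset.sum_sub_distrib, Finset.mul_sum]
      refine (Finset.abs_sum_le_sum_abs _ _).trans (Finset.sum_le_sum fun k _ => ?_)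
      rw [← mul_sub, abs_mul, hpτ]
      exact mul_le_mul_of_nonneg_right (f1 hτ i k) (abs_nonneg _)
    · rw [indicator_of_notMem hτ, indicator_of_notMem hτ, sub_self, abs_zero]
      exact mul_nonneg hM (Finset.sum_nonneg fun j _ => abs_nonneg _))
  rw [← ae_all_iff] at hz
  filter_upwards [hz] with t h1 ht
  ext i
  have h2 := h1 i
  simp only [hp] at h2
  rw [indicator_of_mem ht] at h2
  linarith

theorem ae_of_local {a : ℝ} {I : Set ℝ} (haI : a ∈ I) (hIsub : I ⊆ Ici a) {P : ℝ → Prop}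
    (h : ∀ b ∈ I, a < b → ∀ᵐ t, t ∈ Ioc a b → P t) : ∀ᵐ t ∂(volume.restrict I), P t := by
  refine ae_restrict_of_ae_restrict_inter_Ioo fun x y hx hy hxy => ?_
  have hax : a ≤ x := hIsub hx
  have h1 : ∀ᵐ t ∂(volume.restrict (Ioc a y)), P t := by
    rw [ae_restrict_iff' measurableSet_Ioc]
    exact h y hy (lt_of_le_of_lt hax hxy)
  refine ae_restrict_of_ae_restrict_of_subset ?_ h1
  intro t ht
  exact ⟨lt_of_le_of_lt hax ht.2.1, ht.2.2.le⟩

theorem statement11 (a : ℝ) (I : Set ℝ)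
    (haI : a ∈ I) (hIsub : I ⊆ Set.Ici a) (hIint : (interior I).Nonempty)
    (hIord : I.OrdConnected)
    (m : ℕ) (hm : 0 < m)
    (α : Fin m → ℝ) (hα : ∀ i, 0 < α i ∧ α i ≤ 1)
    (qa : Fin m → ℝ)
    (A : ℝ → Matrix (Fin m) (Fin m) ℝ) (B : ℝ → Fin m → ℝ)
    -- `A` and `B` are measurable and locally essentially bounded on `I`
    (hAmeas : ∀ i j, Measurable fun t => A t i j)
    (hAbdd : ∀ b ∈ I, ∃ M : ℝ,
      ∀ᵐ t ∂(volume.restrict (Set.Icc a b)), ∀ i j, |A t i j| ≤ M)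
    (hBmeas : ∀ i, Measurable fun t => B t i)
    (hBbdd : ∀ b ∈ I, ∃ M : ℝ,
      ∀ᵐ t ∂(volume.restrict (Set.Icc a b)), ∀ i, |B t i| ≤ M)
    (Z : ℝ → ℝ → Matrix (Fin m) (Fin m) ℝ)
    (hZmeas : ∀ i j, Measurable fun p : ℝ × ℝ => Z p.1 p.2 i j)
    -- `Z` satisfies the left state-transition integral equation (row-constant multi-order)
    (hZeq : ∀ s ∈ I, ∀ᵐ t ∂(volume.restrict I), s < t → ∀ i j,
      Z t s i j = (t - s) ^ (α i - 1) / Real.Gamma (α i) * (if i = j then (1:ℝ) else 0)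
        + (1 / Real.Gamma (α i)) *
            ∫ τ in s..t, (t - τ) ^ (α i - 1) * ∑ k, A τ i k * Z τ s k j)
    -- the bound `|Z_{ij}(t,s)| ≤ (t-s)^{α_i - 1} Θ^b` on each `[a,b] ⊆ I`
    (hZbdd : ∀ b ∈ I, ∃ Θ : ℝ, 0 ≤ Θ ∧
      ∀ s ∈ Set.Ico a b, ∀ᵐ t ∂(volume.restrict I), s < t → t ≤ b → ∀ i j,
        |Z t s i j| ≤ (t - s) ^ (α i - 1) * Θ)
    (q : ℝ → Fin m → ℝ)
    -- `q` is given by the fractional Duhamel formula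
    (hq : ∀ᵐ t ∂(volume.restrict I), ∀ i,
      q t i = (∑ j, Z t a i j * qa j) + ∫ s in a..t, ∑ j, Z t s i j * B s j) :
    (∀ᵐ t ∂(volume.restrict I), ∀ i,
      q t i = (t - a) ^ (α i - 1) / Real.Gamma (α i) * qa i
        + (1 / Real.Gamma (α i)) *
            ∫ τ in a..t, (t - τ) ^ (α i - 1) * ((∑ j, A τ i j * q τ j) + B τ i)) ∧
    IsRLSolution a I α qa (fun x t i => (∑ j, A t i j * x j) + B t i) q ∧
    ∀ q' : ℝ → Fin m → ℝ,
      IsRLSolution a I α qa (fun x t i => (∑ j, A t i j * x j) + B t i) q' →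
      ∀ᵐ t ∂(volume.restrict I), q' t = q t := by
  have hα0 : ∀ i, 0 < α i := fun i => (hα i).1
  have hsub : ∀ b ∈ I, Icc a b ⊆ I := fun b hb => hIord.out haI hb
  have hsub' : ∀ b ∈ I, Ioc a b ⊆ I := fun b hb => Ioc_subset_Icc_self.trans (hsub b hb)
  have toloc : ∀ b ∈ I, ∀ P : ℝ → Prop, (∀ᵐ t ∂(volume.restrict I), P t) →
      ∀ᵐ t, t ∈ Ioc a b → P t := by
    intro b hb P hP
    rw [← ae_restrict_iff' measurableSet_Ioc]
    exact ae_restrict_of_ae_restrict_of_subset (hsub' b hb) hP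
  have toloc' : ∀ b, ∀ P : ℝ → Prop, (∀ᵐ t ∂(volume.restrict (Icc a b)), P t) →
      ∀ᵐ t, t ∈ Ioc a b → P t := by
    intro b P hP
    rw [← ae_restrict_iff' measurableSet_Ioc]
    exact ae_restrict_of_ae_restrict_of_subset Ioc_subset_Icc_self hP
  have hA : ∀ b ∈ I, ∃ M : ℝ, 0 ≤ M ∧ ∀ᵐ t, t ∈ Ioc a b → ∀ i j, |A t i j| ≤ M := by
    intro b hb
    obtain ⟨M, hM⟩ := hAbdd b hb
    refine ⟨max M 0, le_max_right _ _, ?_⟩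
    filter_upwards [toloc' b _ hM] with t h1 ht i j
    exact (h1 ht i j).trans (le_max_left _ _)
  have hB : ∀ b ∈ I, ∃ M : ℝ, 0 ≤ M ∧ ∀ᵐ t, t ∈ Ioc a b → ∀ i, |B t i| ≤ M := by
    intro b hb
    obtain ⟨M, hM⟩ := hBbdd b hb
    refine ⟨max M 0, le_max_right _ _, ?_⟩
    filter_upwards [toloc' b _ hM] with t h1 ht i
    exact (h1 ht i).trans (le_max_left _ _)
  have key : ∀ b ∈ I, a < b → (∀ i, IntegrableOn (fun t => q t i) (Ioc a b)) ∧
    (∀ᵐ t, t ∈ Ioc a b → ∀ i,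
      q t i = (t - a) ^ (α i - 1) / Real.Gamma (α i) * qa i
        + (1 / Real.Gamma (α i)) *
            ∫ τ in a..t, (t - τ) ^ (α i - 1) * ((∑ j, A τ i j * q τ j) + B τ i)) := by
    intro b hb hab
    obtain ⟨M, hM, hAM⟩ := hA b hb
    obtain ⟨N, hN, hBN⟩ := hB b hb
    obtain ⟨Θ, hΘ, hZΘ⟩ := hZbdd b hb
    refine local_duhamel hab hα0 qa A B hAmeas hM hN hΘ hAM hBmeas hBN Z hZmeas ?_ ?_ q
      (toloc b hb _ hq)
    · intro s hs
      exact toloc b hb _ (hZeq s (hsub b hb ⟨hs.1, hs.2.le⟩))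
    · intro s hs
      filter_upwards [toloc b hb _ (hZΘ s hs)] with t h1 ht hst
      exact h1 ht hst ht.2
  have hhint : ∀ b ∈ I, a < b → ∀ i,
      IntegrableOn (fun t => (∑ j, A t i j * q t j) + B t i) (Ioc a b) := by
    intro b hb hab i
    obtain ⟨M, hM, hAM⟩ := hA b hb
    obtain ⟨N, hN, hBN⟩ := hB b hb
    refine Integrable.add (integrable_finsetSum _ fun j _ => ?_) ?_
    · refine ((key b hb hab).1 j).bdd_mul (c := M) (hAmeas i j).aestronglyMeasurable ?_
      rw [ae_restrict_iff' measurableSet_Ioc]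
      filter_upwards [hAM] with t h1 ht
      exact h1 ht i j
    · refine Integrable.mono' (g := fun _ => N) (by simp) (hBmeas i).aestronglyMeasurable ?_
      rw [ae_restrict_iff' measurableSet_Ioc]
      filter_upwards [hBN] with t h1 ht
      exact h1 ht i
  have toLI : ∀ f : ℝ → ℝ, (∀ b ∈ I, a < b → IntegrableOn f (Ioc a b)) →
      LocIntegrableOn a I f := by
    intro f hf b hb
    rw [integrableOn_Icc_iff_integrableOn_Ioc]
    rcases eq_or_lt_of_le (show a ≤ b from hIsub hb) with rfl | hab
    · simp
    · exact hf b hb hab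
  refine ⟨ae_of_local haI hIsub fun b hb hab => (key b hb hab).2, ⟨?_, ?_⟩, ?_⟩
  · intro i
    exact toLI _ fun b hb hab => (key b hb hab).1 i
  · intro i
    refine ⟨fun t => (∑ j, A t i j * q t j) + B t i, toLI _ fun b hb hab => hhint b hb hab i, ?_,
      Eventually.of_forall fun t => rfl⟩
    refine ae_of_local haI hIsub fun b hb hab => ?_
    refine rl_of_int hab (hα0 i) (hα i).2 (hhint b hb hab i) ?_
    filter_upwards [(key b hb hab).2] with t h1 ht
    exact h1 ht i
  · rintro q' ⟨hq'1, hq'2⟩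
    choose h' hh'1 hh'2 hh'3 using hq'2
    refine ae_of_local haI hIsub fun b hb hab => ?_
    obtain ⟨M, hM, hAM⟩ := hA b hb
    have j1 : ∀ i, IntegrableOn (fun t => q' t i) (Ioc a b) := fun i =>
      (hq'1 i b hb).mono_set Ioc_subset_Icc_self
    have j2 : ∀ i, IntegrableOn (h' i) (Ioc a b) := fun i =>
      (hh'1 i b hb).mono_set Ioc_subset_Icc_self
    refine local_unique hab hα0 qa A B hM hAM q q'
      (fun i t => (∑ j, A t i j * q t j) + B t i) h' (key b hb hab).1 j1 (hhint b hb hab) j2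
      (fun i => Eventually.of_forall fun t _ => rfl) (fun i => toloc b hb _ (hh'3 i)) ?_ ?_
    · intro i
      filter_upwards [(key b hb hab).2] with t h1 ht
      exact h1 ht i
    · intro i
      exact int_of_rl hab (hα0 i) (hα i).2 (j2 i) (j1 i) (toloc b hb _ (hh'2 i))
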